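/- Let Σ be a finite set, F a set of finitary operations on ℘(Σ), and 𝒜₀ a Moore family on Σ. Consider sequences 𝒜₀, 𝒜₁, 𝒜₂, … of Moore families in which 𝒜_{i+1} = M(𝒜_i ∪ {f_i(S⃗_i)}) for some f_i ∈ F and some tuple S⃗_i ∈ 𝒜_i^{n_{f_i}} with f_i(S⃗_i) ∉ 𝒜_i. Every such sequence is finite, and whenever such a sequence ends at a forward F-complete Moore family 𝒜_n, then 𝒜_n = S_F(𝒜₀), the least forward F-complete Moore family containing 𝒜₀. -/

import Mathlib

set_option linter.unusedVariables false

universe u v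

variable {X : Type u} {A : Type v}

/-- A Moore family: a collection of subsets closed under arbitrary intersections. -/
def IsMoore (M : Set (Set X)) : Prop := ∀ S ⊆ M, ⋂₀ S ∈ M

/-- The least Moore family containing `C`. -/
def mClose (C : Set (Set X)) : Set (Set X) := ⋂₀ {M | IsMoore M ∧ C ⊆ M}

/-- A disjunctive Moore family: additionally closed under arbitrary unions. -/
def IsDisjMoore (M : Set (Set X)) : Prop := IsMoore M ∧ ∀ S ⊆ M, ⋃₀ S ∈ M

/-- The least disjunctive Moore family containing `C`. -/
def dClose (C : Set (Set X)) : Set (Set X) := ⋂₀ {M | IsDisjMoore M ∧ C ⊆ M}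

/-- The closure operator associated with a Moore family. -/
def mu (M : Set (Set X)) (S : Set X) : Set X := ⋂₀ {T | T ∈ M ∧ S ⊆ T}

/-- The partition (as a setoid) induced by a Moore family:
`s ≡ s'` iff `μ {s} = μ {s'}`. -/
def prS (M : Set (Set X)) : Setoid X :=
  ⟨fun s t => mu M {s} = mu M {t}, ⟨fun _ => rfl, Eq.symm, Eq.trans⟩⟩

/-- The Moore family of all `P`-saturated sets (unions of blocks of `P`). -/
def padS (P : Setoid X) : Set (Set X) := {S | ∀ s ∈ S, ∀ t, P.r s t → t ∈ S}

/-- `P` refines `Q`: every block of `P` is contained in a block of `Q`. -/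
def refines (P Q : Setoid X) : Prop := ∀ s t, P.r s t → Q.r s t

/-- A finitary operation on `℘(X)`: an arity `n` together with a map `℘(X)^n → ℘(X)`. -/
abbrev Op (X : Type u) := (n : ℕ) × ((Fin n → Set X) → Set X)

/-- The image `F(S)` of a set of operations on a collection of subsets. -/
def imageF (F : Set (Op X)) (S : Set (Set X)) : Set (Set X) :=
  {T | ∃ f ∈ F, ∃ args : Fin f.1 → Set X, (∀ i, args i ∈ S) ∧ T = f.2 args}

/-- Forward `F`-completeness: `F(S) ⊆ S`. -/
def FComplete (F : Set (Op X)) (S : Set (Set X)) : Prop := imageF F S ⊆ S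

/-- The forward `F`-complete shell: the least forward `F`-complete Moore family
containing `M`. -/
def shellF (F : Set (Op X)) (M : Set (Set X)) : Set (Set X) :=
  ⋂₀ {B | IsMoore B ∧ FComplete F B ∧ M ⊆ B}

/-- Predecessor operator of a transition relation. -/
def preR (r : X → X → Prop) (S : Set X) : Set X := {s | ∃ t ∈ S, r s t}

/-- The split of a partition `P` by a set `T`: blocks are the nonempty sets
among `B ∩ T` and `B \ T` for blocks `B` of `P`. -/
def splitS (T : Set X) (P : Setoid X) : Setoid X :=
  ⟨fun s t => P.r s t ∧ (s ∈ T ↔ t ∈ T),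
   ⟨fun s => ⟨P.iseqv.refl s, Iff.rfl⟩,
    fun h => ⟨P.iseqv.symm h.1, h.2.symm⟩,
    fun h1 h2 => ⟨P.iseqv.trans h1.1 h2.1, h1.2.trans h2.2⟩⟩⟩

/-- Abstract refinement: `refine_f^A(S, a) = α(M(γ(a) ∪ {f(S)}))`. -/
def refineA [Preorder A] (al : Set (Set X) → A) (ga : A → Set (Set X))
    (f : Op X) (S : Fin f.1 → Set X) (a : A) : A :=
  al (mClose (ga a ∪ {f.2 S}))

/-- Abstract refiners: tuples in `γ(a)^n` whose refinement is strictly below `a`. -/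
def refinersA [Preorder A] (al : Set (Set X) → A) (ga : A → Set (Set X))
    (f : Op X) (a : A) : Set (Fin f.1 → Set X) :=
  {S | (∀ i, S i ∈ ga a) ∧ refineA al ga f S a < a}

/-- One step of the GPT algorithm: refine by some refiner of some `f ∈ F`. -/
def StepA [Preorder A] (F : Set (Op X)) (al : Set (Set X) → A) (ga : A → Set (Set X))
    (a b : A) : Prop :=
  ∃ f ∈ F, ∃ S : Fin f.1 → Set X, S ∈ refinersA al ga f a ∧ b = refineA al ga f S a

/-- The setoid induced by a collection of sets: `s ≡ t` iff no set of the
collection separates them. -/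
def indSetoid (C : Set (Set X)) : Setoid X :=
  ⟨fun s t => ∀ T ∈ C, (s ∈ T ↔ t ∈ T),
   ⟨fun _ _ _ => Iff.rfl, fun h T hT => (h T hT).symm,
    fun h1 h2 T hT => (h1 T hT).trans (h2 T hT)⟩⟩

/-- The block of `P` containing `s`. -/
def blockOf (P : Setoid X) (s : X) : Set X := {t | P.r s t}

/-- The existential-until operator `EU(S₁, S₂)`. -/
def EUset (r : X → X → Prop) (S1 S2 : Set X) : Set X :=
  S2 ∪ {s | s ∈ S1 ∧ ∃ (n : ℕ) (p : ℕ → X), p 0 = s ∧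
    (∀ i < n, p i ∈ S1 ∧ r (p i) (p (i+1))) ∧ p n ∈ S2}


theorem sub_mClose_aux (C : Set (Set X)) : C ⊆ mClose C :=
  fun _ hT _ hM => hM.2 hT

theorem isMoore_mClose_aux (C : Set (Set X)) : IsMoore (mClose C) :=
  fun S hS M hM => hM.1 S (fun _ hT => hS hT M hM)

theorem stmt7 [Finite X] (F : Set (Op X)) (M0 : Set (Set X)) (hM0 : IsMoore M0) :
    (¬ ∃ seq : ℕ → Set (Set X), seq 0 = M0 ∧ ∀ i : ℕ,
      ∃ f ∈ F, ∃ S : Fin f.1 → Set X, (∀ j, S j ∈ seq i) ∧ f.2 S ∉ seq i ∧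
        seq (i + 1) = mClose (seq i ∪ {f.2 S})) ∧
    (∀ (n : ℕ) (seq : ℕ → Set (Set X)), seq 0 = M0 →
      (∀ i < n, ∃ f ∈ F, ∃ S : Fin f.1 → Set X, (∀ j, S j ∈ seq i) ∧ f.2 S ∉ seq i ∧
        seq (i + 1) = mClose (seq i ∪ {f.2 S})) →
      FComplete F (seq n) → seq n = shellF F M0) := by
  constructor
  · rintro ⟨seq, -, h⟩
    have hs : StrictMono seq := by
      refine strictMono_nat_of_lt_succ fun i => ?_
      obtain ⟨f, -, S, -, hn, he⟩ := h i
      have hsub := sub_mClose_aux (seq i ∪ {f.2 S})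
      rw [← he] at hsub
      exact ⟨fun T hT => hsub (Or.inl hT), fun hc => hn (hc (hsub (Or.inr rfl)))⟩
    exact not_injective_infinite_finite seq hs.injective
  · intro n seq h0 h hc
    have key : ∀ i ≤ n, IsMoore (seq i) ∧ M0 ⊆ seq i ∧ seq i ⊆ shellF F M0 := by
      intro i
      induction i with
      | zero =>
        intro _
        rw [h0]
        exact ⟨hM0, subset_rfl, fun T hT B hB => hB.2.2 hT⟩
      | succ i ih =>
        intro hi
        obtain ⟨-, h2, h3⟩ := ih (by omega)
        obtain ⟨f, hf, S, hS, -, he⟩ := h i (by omega)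
        rw [he]
        refine ⟨isMoore_mClose_aux _, fun T hT => sub_mClose_aux _ (Or.inl (h2 hT)), ?_⟩
        intro T hT B hB
        refine hT B ⟨hB.1, ?_⟩
        rintro U (hU | hU)
        · exact h3 hU B hB
        · exact hB.2.1 ⟨f, hf, S, fun j => h3 (hS j) B hB, hU⟩
    obtain ⟨k1, k2, k3⟩ := key n le_rfl
    exact subset_antisymm k3 (fun T hT => hT _ ⟨k1, hc, k2⟩)
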